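/- arXiv:1904.04277 — 3 statements merged into one kernel-verified Lean document; each statement's English description precedes it below -/
import Mathlib

section
/- Let p be a positive integer and let f₁, f₂, g₁, g₂ be p×2p complex matrices, each of rank p, such that f₁g₁* = 0 and f₂g₂* = 0. Then det(f₁f₂*) ≠ 0 if and only if det(g₁g₂*) ≠ 0. -/
/-!
If `f` and `g` have full row rank and their ranks add up to the number of columns, then
`f * gᴴ = 0` means `ker f = range gᴴ`. Since `f₂ᴴ` is injective, `f₁ * f₂ᴴ` is nonsingular iff
`range f₂ᴴ` meets `ker f₁` trivially; likewise `g₂ * g₁ᴴ` is nonsingular iff `range g₁ᴴ` meets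
`ker g₂` trivially. As `ker f₁ = range g₁ᴴ` and `ker g₂ = range f₂ᴴ`, these conditions coincide.
-/

open Matrix

section LinearMap

variable {R U M N P Q : Type*} [Ring R] [AddCommGroup U] [AddCommGroup M] [AddCommGroup N]
  [AddCommGroup P] [AddCommGroup Q] [Module R U] [Module R M] [Module R N] [Module R P] [Module R Q]

lemma injective_comp_iff_disjoint_range_ker {f : M →ₗ[R] N} (hf : Function.Injective f)
    (g : N →ₗ[R] P) :
    Function.Injective (g ∘ₗ f) ↔ Disjoint (LinearMap.range f) (LinearMap.ker g) := by
  rw [LinearMap.disjoint_ker_iff_injOn, LinearMap.coe_range, LinearMap.coe_comp]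
  exact ⟨fun hgf ↦ hgf.injOn_range, fun hg x y hxy ↦ hf (hg ⟨x, rfl⟩ ⟨y, rfl⟩ hxy)⟩

lemma injective_comp_iff_of_exact {a : N →ₗ[R] P} {b : U →ₗ[R] N} {c : M →ₗ[R] N}
    {d : N →ₗ[R] Q} (hba : Function.Exact b a) (hcd : Function.Exact c d)
    (hb : Function.Injective b) (hc : Function.Injective c) :
    Function.Injective (a ∘ₗ c) ↔ Function.Injective (d ∘ₗ b) := by
  rw [injective_comp_iff_disjoint_range_ker hc, injective_comp_iff_disjoint_range_ker hb,
    hba.linearMap_ker_eq, hcd.linearMap_ker_eq, disjoint_comm]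

end LinearMap

lemma exact_of_comp_eq_zero_of_finrank_add_eq {K U V W : Type*} [DivisionRing K] [AddCommGroup U]
    [AddCommGroup V] [AddCommGroup W] [Module K U] [Module K V] [Module K W] [FiniteDimensional K V]
    {f : U →ₗ[K] V} {g : V →ₗ[K] W} (hf : Function.Injective f) (hg : Function.Surjective g)
    (hgf : g ∘ₗ f = 0)
    (hdim : Module.finrank K W + Module.finrank K U = Module.finrank K V) :
    Function.Exact f g := by
  rw [LinearMap.exact_iff]
  refine (Submodule.eq_of_le_of_finrank_eq (LinearMap.range_le_ker_iff.mpr hgf) ?_).symm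
  have hnullity := g.finrank_range_add_finrank_ker
  rw [LinearMap.range_eq_top.mpr hg, finrank_top] at hnullity
  rw [LinearMap.finrank_range_of_inj hf]
  lia

section Matrix

variable {K k m n : Type*} [Field K] [Fintype k] [Fintype m] [Fintype n]

lemma det_ne_zero_iff_mulVec_injective [DecidableEq m] {A : Matrix m m K} :
    A.det ≠ 0 ↔ Function.Injective A.mulVec := by
  rw [mulVec_injective_iff_isUnit, isUnit_iff_isUnit_det, isUnit_iff_ne_zero]

lemma det_mul_ne_zero_iff_of_exact [DecidableEq k] [DecidableEq m] {A : Matrix m n K}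
    {B : Matrix n k K} {C : Matrix n m K} {D : Matrix k n K}
    (hBA : Function.Exact B.mulVec A.mulVec) (hCD : Function.Exact C.mulVec D.mulVec)
    (hB : Function.Injective B.mulVec) (hC : Function.Injective C.mulVec) :
    (A * C).det ≠ 0 ↔ (D * B).det ≠ 0 := by
  simp only [det_ne_zero_iff_mulVec_injective, ← coe_mulVecLin, mulVecLin_mul]
  exact injective_comp_iff_of_exact hBA hCD hB hC

lemma mulVec_surjective_of_rank_eq_card {A : Matrix m n K} (hA : A.rank = Fintype.card m) :
    Function.Surjective A.mulVec := by
  rw [← coe_mulVecLin, ← LinearMap.range_eq_top]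
  exact Submodule.eq_top_of_finrank_eq (hA.trans (Module.finrank_fintype_fun_eq_card K).symm)

variable [StarRing K]

lemma mulVec_conjTranspose_injective_of_rank_eq_card {A : Matrix m n K}
    (hA : A.rank = Fintype.card m) : Function.Injective Aᴴ.mulVec := by
  classical
  obtain ⟨B, hAB⟩ :=
    mulVec_surjective_iff_exists_right_inverse.mp (mulVec_surjective_of_rank_eq_card hA)
  have hBA : Bᴴ * Aᴴ = 1 := by rw [← conjTranspose_mul, hAB, conjTranspose_one]
  exact Function.LeftInverse.injective (g := Bᴴ.mulVec) fun v ↦ by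
    rw [mulVec_mulVec, hBA, one_mulVec]

lemma exact_mulVec_conjTranspose_mulVec {f : Matrix m n K} {g : Matrix k n K}
    (hcard : Fintype.card m + Fintype.card k = Fintype.card n)
    (hf : f.rank = Fintype.card m) (hg : g.rank = Fintype.card k) (hfg : f * gᴴ = 0) :
    Function.Exact gᴴ.mulVec f.mulVec := by
  have hcomp : f.mulVecLin ∘ₗ gᴴ.mulVecLin = 0 := by rw [← mulVecLin_mul, hfg, mulVecLin_zero]
  exact exact_of_comp_eq_zero_of_finrank_add_eq (mulVec_conjTranspose_injective_of_rank_eq_card hg)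
    (mulVec_surjective_of_rank_eq_card hf) hcomp
    (by simpa only [Module.finrank_fintype_fun_eq_card] using hcard)

theorem stmt_0_general [DecidableEq k] [DecidableEq m] {f₁ f₂ : Matrix m n K}
    {g₁ g₂ : Matrix k n K} (hcard : Fintype.card m + Fintype.card k = Fintype.card n)
    (hf₁ : f₁.rank = Fintype.card m) (hf₂ : f₂.rank = Fintype.card m)
    (hg₁ : g₁.rank = Fintype.card k) (hg₂ : g₂.rank = Fintype.card k)
    (h₁ : f₁ * g₁ᴴ = 0) (h₂ : f₂ * g₂ᴴ = 0) :
    (f₁ * f₂ᴴ).det ≠ 0 ↔ (g₁ * g₂ᴴ).det ≠ 0 := by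
  have h₂' : g₂ * f₂ᴴ = 0 := by simpa using congrArg conjTranspose h₂
  calc (f₁ * f₂ᴴ).det ≠ 0
    _ ↔ (g₂ * g₁ᴴ).det ≠ 0 := det_mul_ne_zero_iff_of_exact
        (exact_mulVec_conjTranspose_mulVec hcard hf₁ hg₁ h₁)
        (exact_mulVec_conjTranspose_mulVec ((add_comm _ _).trans hcard) hg₂ hf₂ h₂')
        (mulVec_conjTranspose_injective_of_rank_eq_card hg₁)
        (mulVec_conjTranspose_injective_of_rank_eq_card hf₂)
    _ ↔ (g₁ * g₂ᴴ).det ≠ 0 := by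
        rw [← star_ne_zero, ← det_conjTranspose, conjTranspose_mul, conjTranspose_conjTranspose]

end Matrix

/-- Let `p` be a positive integer and `f₁, f₂, g₁, g₂` be `p × 2p` complex
matrices, each of rank `p`, such that `f₁ * g₁ᴴ = 0` and `f₂ * g₂ᴴ = 0`. Then
`det (f₁ * f₂ᴴ) ≠ 0` if and only if `det (g₁ * g₂ᴴ) ≠ 0`. -/
theorem stmt_0 (p : ℕ) (hp : 0 < p)
    (f₁ f₂ g₁ g₂ : Matrix (Fin p) (Fin (2 * p)) ℂ)
    (hf₁ : f₁.rank = p) (hf₂ : f₂.rank = p) (hg₁ : g₁.rank = p) (hg₂ : g₂.rank = p)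
    (h₁ : f₁ * g₁ᴴ = 0) (h₂ : f₂ * g₂ᴴ = 0) :
    (f₁ * f₂ᴴ).det ≠ 0 ↔ (g₁ * g₂ᴴ).det ≠ 0 :=
  stmt_0_general (by simp [two_mul]) (by simpa) (by simpa) (by simpa) (by simpa) h₁ h₂
end

section
/- Under the block Toeplitz setup, the identity A·S − S·A* = i(Φ₁Φ₂* + Φ₂Φ₁*) holds; moreover, S is the unique pn×pn complex matrix X satisfying A·X − X·A* = i(Φ₁Φ₂* + Φ₂Φ₁*). -/
open Matrix

/-- The `pn × pn` block Toeplitz matrix whose `(i,j)` block is `s (j - i)`. -/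
noncomputable def toeplitzS (p n : ℕ) (s : ℤ → Matrix (Fin p) (Fin p) ℂ) :
    Matrix (Fin n × Fin p) (Fin n × Fin p) ℂ :=
  Matrix.of fun x y => s ((y.1 : ℤ) - (x.1 : ℤ)) x.2 y.2

/-- The `pn × pn` block lower triangular matrix `A` whose `(i,j)` block is `0` for `j > i`,
`(i/2) I_p` for `j = i` and `i I_p` for `j < i`. -/
noncomputable def toeplitzA (p n : ℕ) : Matrix (Fin n × Fin p) (Fin n × Fin p) ℂ :=
  Matrix.of fun x y =>
    (if (y.1 : ℕ) < (x.1 : ℕ) then Complex.I else if x.1 = y.1 then Complex.I / 2 else 0) *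
      (if x.2 = y.2 then 1 else 0)

/-- The `pn × p` block column all of whose `n` blocks equal `I_p`. -/
noncomputable def toeplitzPhi2 (p n : ℕ) : Matrix (Fin n × Fin p) (Fin p) ℂ :=
  Matrix.of fun x b => if x.2 = b then 1 else 0

/-- The `pn × p` block column whose `k`-th block (`1 ≤ k ≤ n`) is
`s₀/2 + s₋₁ + ⋯ + s_{1-k} + i ν`. -/
noncomputable def toeplitzPhi1 (p n : ℕ) (s : ℤ → Matrix (Fin p) (Fin p) ℂ)
    (ν : Matrix (Fin p) (Fin p) ℂ) : Matrix (Fin n × Fin p) (Fin p) ℂ :=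
  Matrix.of fun x b =>
    ((2 : ℂ)⁻¹ • s 0 + (∑ j ∈ Finset.Icc 1 (x.1 : ℕ), s (-(j : ℤ))) + Complex.I • ν) x.2 b

/-!
Write `A = i (½ + L)`, where `L` is the strictly lower triangular block matrix of identity blocks.
Since `L` is nilpotent, `A` has the single eigenvalue `i/2` and `Aᴴ` the single eigenvalue `-i/2`;
these differ, so the Sylvester operator `X ↦ A X - X Aᴴ` is injective. On the other hand
`A X - X Aᴴ = i (X + L X + X Lᴴ)`, so the `(i, j)` block of the left side at `X = S` is `i` times
the sum of the blocks of `S` along the hook that ends at `(i, j)`. For a Toeplitz matrix the hook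
meets each diagonal `-i, …, j` exactly once, and the sum splits at the main diagonal into a part
depending only on `i` and its adjoint counterpart depending only on `j`, which is the right side.
-/

theorem eq_zero_of_semiconjBy_of_isNilpotent {M : Type*} [MonoidWithZero M] {a b x : M}
    (ha : IsNilpotent a) (hb : IsUnit b) (h : SemiconjBy x b a) : x = 0 := by
  obtain ⟨k, hk⟩ := ha
  have hx : x * b ^ k = 0 := by rw [(h.pow_right k).eq, hk, zero_mul]
  exact (hb.pow k).mul_left_eq_zero.mp hx

theorem injective_mul_sub_mul_of_isNilpotent_sub_algebraMap {K R : Type*} [CommRing K] [Ring R]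
    [Algebra K R] {a b : R} {c d : K} (hcd : IsUnit (d - c))
    (ha : IsNilpotent (a - algebraMap K R c)) (hb : IsNilpotent (b - algebraMap K R d)) :
    Function.Injective fun x : R => a * x - x * b := by
  intro x y hxy
  have hintertwine : SemiconjBy (x - y) b a := by
    have hker : a * (x - y) - (x - y) * b = 0 := by
      rw [mul_sub, sub_mul, sub_sub_sub_comm, sub_eq_zero]
      exact hxy
    exact (sub_eq_zero.mp hker).symm
  have hunit : IsUnit (b - algebraMap K R c) := by
    have hsplit : b - algebraMap K R c =
        algebraMap K R (d - c) + (b - algebraMap K R d) := by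
      rw [map_sub]
      abel
    rw [hsplit]
    exact hb.isUnit_add_left_of_commute (hcd.map _) (Algebra.commutes _ _).symm
  have hcentral : SemiconjBy (x - y) (algebraMap K R c) (algebraMap K R c) :=
    (Algebra.commutes c (x - y)).symm
  exact sub_eq_zero.mp
    (eq_zero_of_semiconjBy_of_isNilpotent ha hunit (hintertwine.sub_right hcentral))

theorem isNilpotent_of_forall_le_apply_eq_zero {m R : Type*} [Fintype m] [DecidableEq m]
    [Semiring R] {M : Matrix m m R} (level : m → ℕ)
    (hM : ∀ x y, level x ≤ level y → M x y = 0) : IsNilpotent M := by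
  have hpow (k : ℕ) : ∀ x y, level x < level y + k → (M ^ k) x y = 0 := by
    induction k with
    | zero =>
      intro x y hxy
      exact Matrix.one_apply_ne (by rintro rfl; omega)
    | succ k ih =>
      intro x y hxy
      rw [pow_succ, Matrix.mul_apply]
      refine Finset.sum_eq_zero fun z _ => ?_
      rcases le_or_gt (level z) (level y) with hz | hz
      · rw [hM z y hz, mul_zero]
      · rw [ih x z (by omega), zero_mul]
  refine ⟨Finset.univ.sup level + 1, ?_⟩
  ext x y
  have hx : level x ≤ Finset.univ.sup level := Finset.le_sup (Finset.mem_univ x)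
  exact hpow _ x y (by omega)

section StrictLowerOnes

/-- The strictly lower triangular block matrix all of whose blocks below the diagonal are the
identity. It is the nilpotent part of `toeplitzA`, up to the factor `i`. -/
def strictLowerOnes (ι m R : Type*) [LinearOrder ι] [DecidableEq m] [Semiring R] :
    Matrix (ι × m) (ι × m) R :=
  Matrix.of fun x y => if y.1 < x.1 ∧ x.2 = y.2 then 1 else 0

variable {ι m R : Type*} [LinearOrder ι] [LocallyFiniteOrderBot ι] [Fintype ι] [DecidableEq m]
  [Fintype m] [Semiring R]

theorem strictLowerOnes_mul_apply (X : Matrix (ι × m) (ι × m) R) (i : ι) (a : m) (y : ι × m) :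
    (strictLowerOnes ι m R * X) (i, a) y = ∑ k ∈ Finset.Iio i, X (k, a) y := by
  have hfilter : Finset.univ.filter (· < i) = Finset.Iio i := by
    ext k
    simp
  rw [Matrix.mul_apply, Fintype.sum_prod_type, ← hfilter, Finset.sum_filter]
  simp [strictLowerOnes, ite_and]

theorem mul_strictLowerOnes_conjTranspose_apply [StarRing R] (X : Matrix (ι × m) (ι × m) R)
    (x : ι × m) (j : ι) (b : m) :
    (X * (strictLowerOnes ι m R)ᴴ) x (j, b) = ∑ k ∈ Finset.Iio j, X x (k, b) := by
  rw [← conjTranspose_conjTranspose X, ← conjTranspose_mul, conjTranspose_apply,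
    strictLowerOnes_mul_apply, star_sum]
  simp only [conjTranspose_apply]

theorem isNilpotent_strictLowerOnes : IsNilpotent (strictLowerOnes ι m R) := by
  refine isNilpotent_of_forall_le_apply_eq_zero (fun x => (Finset.Iio x.1).card) fun x y hxy => ?_
  exact if_neg fun h => hxy.not_gt (Finset.card_lt_card (Finset.Iio_ssubset_Iio h.1))

end StrictLowerOnes

theorem toeplitzA_eq_smul_one_add_strictLowerOnes (p n : ℕ) :
    toeplitzA p n =
      (Complex.I / 2) • (1 : Matrix (Fin n × Fin p) (Fin n × Fin p) ℂ) +
        Complex.I • strictLowerOnes (Fin n) (Fin p) ℂ := by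
  ext ⟨i, a⟩ ⟨j, b⟩
  rcases lt_trichotomy j i with h | rfl | h
  · simp [toeplitzA, strictLowerOnes, one_apply, h, h.ne']
  · simp [toeplitzA, strictLowerOnes, one_apply]
  · simp [toeplitzA, strictLowerOnes, one_apply, h.not_gt, h.ne]

theorem star_I_div_two : star (Complex.I / 2) = -(Complex.I / 2) := by
  simp [neg_div]

theorem injective_toeplitzA_mul_sub_mul_conjTranspose (p n : ℕ) :
    Function.Injective fun X : Matrix (Fin n × Fin p) (Fin n × Fin p) ℂ =>
      toeplitzA p n * X - X * (toeplitzA p n)ᴴ := by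
  have hA : IsNilpotent (toeplitzA p n - algebraMap ℂ _ (Complex.I / 2)) := by
    rw [toeplitzA_eq_smul_one_add_strictLowerOnes, Algebra.algebraMap_eq_smul_one,
      add_sub_cancel_left]
    exact isNilpotent_strictLowerOnes.smul Complex.I
  have hAstar : IsNilpotent ((toeplitzA p n)ᴴ - algebraMap ℂ _ (star (Complex.I / 2))) := by
    obtain ⟨k, hk⟩ := hA
    refine ⟨k, ?_⟩
    rw [← star_eq_conjTranspose, algebraMap_star_comm, ← star_sub, ← star_pow, hk, star_zero]
  refine injective_mul_sub_mul_of_isNilpotent_sub_algebraMap ?_ hA hAstar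
  have hgap : star (Complex.I / 2) - Complex.I / 2 = -Complex.I := by
    rw [star_I_div_two]
    ring
  rw [hgap]
  exact (neg_ne_zero.mpr Complex.I_ne_zero).isUnit

theorem toeplitzA_mul_sub_mul_conjTranspose (p n : ℕ)
    (X : Matrix (Fin n × Fin p) (Fin n × Fin p) ℂ) :
    toeplitzA p n * X - X * (toeplitzA p n)ᴴ =
      Complex.I • (X + strictLowerOnes (Fin n) (Fin p) ℂ * X +
        X * (strictLowerOnes (Fin n) (Fin p) ℂ)ᴴ) := by
  rw [toeplitzA_eq_smul_one_add_strictLowerOnes, conjTranspose_add, conjTranspose_smul,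
    conjTranspose_smul, conjTranspose_one, star_I_div_two]
  simp only [add_mul, mul_add, smul_mul_assoc, mul_smul_comm, one_mul, mul_one, Complex.star_def,
    Complex.conj_I]
  module

theorem sum_Iio_fin_eq_sum_range {M : Type*} [AddCommMonoid M] {n : ℕ} (i : Fin n) (f : ℕ → M) :
    ∑ k ∈ Finset.Iio i, f k = ∑ k ∈ Finset.range i, f k := by
  rw [← Nat.Iio_eq_range, ← Fin.map_valEmbedding_Iio, Finset.sum_map]
  rfl

theorem sum_hook_eq_sum_diagonals {M : Type*} [AddCommMonoid M] (f : ℤ → M) (i j : ℕ) :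
    f (j - i) + ∑ k ∈ Finset.range i, f (j - k) + ∑ k ∈ Finset.range j, f (k - i) =
      f 0 + ∑ k ∈ Finset.Icc 1 i, f (-k) + ∑ k ∈ Finset.Icc 1 j, f k := by
  induction i with
  | zero =>
    have h : ∑ k ∈ Finset.range (j + 1), f k = f 0 + ∑ k ∈ Finset.Icc 1 j, f k := by
      rw [Finset.range_eq_Ico, Finset.sum_eq_sum_Ico_succ_bot (Nat.add_one_pos j),
        Finset.Ico_add_one_right_eq_Icc, Nat.cast_zero]
    simpa [Finset.sum_range_succ, add_comm] using h
  | succ i ih =>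
    have hrow : f (j - (i + 1 : ℕ)) + ∑ k ∈ Finset.range j, f (k - (i + 1 : ℕ)) =
        ∑ k ∈ Finset.range j, f (k - i) + f (-(i + 1 : ℕ)) := by
      have h := Finset.sum_range_succ' (fun k : ℕ => f (k - (i + 1 : ℕ))) j
      rw [Finset.sum_range_succ, add_comm] at h
      simpa [add_sub_add_right_eq_sub] using h
    calc
      _ = (f (j - (i + 1 : ℕ)) + ∑ k ∈ Finset.range j, f (k - (i + 1 : ℕ))) +
          (f (j - i) + ∑ k ∈ Finset.range i, f (j - k)) := by
        rw [Finset.sum_range_succ]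
        abel
      _ = (f (j - i) + ∑ k ∈ Finset.range i, f (j - k) + ∑ k ∈ Finset.range j, f (k - i)) +
          f (-(i + 1 : ℕ)) := by
        rw [hrow]
        abel
      _ = _ := by
        rw [ih, Finset.sum_Icc_succ_top (by omega)]
        abel

section HalfSum

variable {E : Type*} [AddCommGroup E] [Module ℂ E]

/-- The half-weighted partial sum `s₀/2 + s₋₁ + ⋯ + s₋ᵢ + i ν`. For matrix coefficients it is the
block of `toeplitzPhi1` at the zero-based index `i`. -/
noncomputable def halfSum (s : ℤ → E) (ν : E) (i : ℕ) : E :=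
  (2 : ℂ)⁻¹ • s 0 + ∑ k ∈ Finset.Icc 1 i, s (-(k : ℤ)) + Complex.I • ν

variable [StarAddMonoid E] [StarModule ℂ E]

theorem halfSum_add_star_halfSum {s : ℤ → E} {ν : E} (hν : IsSelfAdjoint ν) (i : ℕ) {j : ℕ}
    (hs : ∀ k : ℕ, k ≤ j → star (s (-k)) = s k) :
    halfSum s ν i + star (halfSum s ν j) =
      s 0 + ∑ k ∈ Finset.Icc 1 i, s (-(k : ℤ)) + ∑ k ∈ Finset.Icc 1 j, s k := by
  have hs_zero : star (s 0) = s 0 := by simpa using hs 0 j.zero_le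
  have hs_sum : ∑ k ∈ Finset.Icc 1 j, star (s (-(k : ℤ))) = ∑ k ∈ Finset.Icc 1 j, s k :=
    Finset.sum_congr rfl fun k hk => hs k (Finset.mem_Icc.mp hk).2
  simp only [halfSum, star_add, star_smul, star_sum, hs_zero, hs_sum, hν.star_eq,
    star_inv₀, star_ofNat, Complex.star_def, Complex.conj_I]
  module

end HalfSum

theorem toeplitzPhi1_mul_toeplitzPhi2_conjTranspose_apply (p n : ℕ)
    (s : ℤ → Matrix (Fin p) (Fin p) ℂ) (ν : Matrix (Fin p) (Fin p) ℂ)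
    (i j : Fin n) (a b : Fin p) :
    (toeplitzPhi1 p n s ν * (toeplitzPhi2 p n)ᴴ) (i, a) (j, b) = halfSum s ν i a b := by
  simp [Matrix.mul_apply, toeplitzPhi1, toeplitzPhi2, halfSum, apply_ite]

theorem toeplitzS_hook_sum_apply (p n : ℕ) (s : ℤ → Matrix (Fin p) (Fin p) ℂ)
    (i j : Fin n) (a b : Fin p) :
    (toeplitzS p n s + strictLowerOnes (Fin n) (Fin p) ℂ * toeplitzS p n s +
        toeplitzS p n s * (strictLowerOnes (Fin n) (Fin p) ℂ)ᴴ) (i, a) (j, b) =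
      (s 0 + ∑ k ∈ Finset.Icc 1 (i : ℕ), s (-(k : ℤ)) +
        ∑ k ∈ Finset.Icc 1 (j : ℕ), s k) a b := by
  rw [← sum_hook_eq_sum_diagonals, ← sum_Iio_fin_eq_sum_range i fun k => s (j - k),
    ← sum_Iio_fin_eq_sum_range j fun k => s (k - i)]
  simp only [Matrix.add_apply, Matrix.sum_apply, strictLowerOnes_mul_apply,
    mul_strictLowerOnes_conjTranspose_apply, toeplitzS, Matrix.of_apply]

theorem toeplitzS_displacement (p n : ℕ) (s : ℤ → Matrix (Fin p) (Fin p) ℂ)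
    (hs : ∀ k : ℤ, k.natAbs < n → s (-k) = (s k)ᴴ)
    (ν : Matrix (Fin p) (Fin p) ℂ) (hν : ν.IsHermitian) :
    toeplitzA p n * toeplitzS p n s - toeplitzS p n s * (toeplitzA p n)ᴴ =
      Complex.I • (toeplitzPhi1 p n s ν * (toeplitzPhi2 p n)ᴴ +
        toeplitzPhi2 p n * (toeplitzPhi1 p n s ν)ᴴ) := by
  have hadjoint : toeplitzPhi2 p n * (toeplitzPhi1 p n s ν)ᴴ =
      (toeplitzPhi1 p n s ν * (toeplitzPhi2 p n)ᴴ)ᴴ := by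
    rw [conjTranspose_mul, conjTranspose_conjTranspose]
  rw [toeplitzA_mul_sub_mul_conjTranspose, hadjoint]
  congr 1
  ext ⟨i, a⟩ ⟨j, b⟩
  have hs_star (k : ℕ) (hk : k ≤ (j : ℕ)) : star (s (-k)) = s k := by
    rw [hs k (by omega), star_eq_conjTranspose, conjTranspose_conjTranspose]
  rw [toeplitzS_hook_sum_apply, ← halfSum_add_star_halfSum hν.isSelfAdjoint i hs_star]
  simp only [Matrix.add_apply, conjTranspose_apply, star_apply,
    toeplitzPhi1_mul_toeplitzPhi2_conjTranspose_apply]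

/-- Under the block Toeplitz setup, the identity
`A S - S Aᴴ = i (Φ₁ Φ₂ᴴ + Φ₂ Φ₁ᴴ)` holds; moreover `S` is the unique `pn × pn` complex matrix
`X` satisfying `A X - X Aᴴ = i (Φ₁ Φ₂ᴴ + Φ₂ Φ₁ᴴ)`. -/
theorem stmt_1 (p n : ℕ) (hp : 0 < p) (hn : 0 < n)
    (s : ℤ → Matrix (Fin p) (Fin p) ℂ)
    (hs : ∀ k : ℤ, k.natAbs < n → s (-k) = (s k)ᴴ)
    (ν : Matrix (Fin p) (Fin p) ℂ) (hν : ν.IsHermitian) :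
    (toeplitzA p n * toeplitzS p n s - toeplitzS p n s * (toeplitzA p n)ᴴ =
        Complex.I • (toeplitzPhi1 p n s ν * (toeplitzPhi2 p n)ᴴ +
          toeplitzPhi2 p n * (toeplitzPhi1 p n s ν)ᴴ)) ∧
      ∀ X : Matrix (Fin n × Fin p) (Fin n × Fin p) ℂ,
        toeplitzA p n * X - X * (toeplitzA p n)ᴴ =
          Complex.I • (toeplitzPhi1 p n s ν * (toeplitzPhi2 p n)ᴴ +
            toeplitzPhi2 p n * (toeplitzPhi1 p n s ν)ᴴ) →
        X = toeplitzS p n s := by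
  have identity := toeplitzS_displacement p n s hs ν hν
  exact ⟨identity, fun X hX =>
    injective_toeplitzA_mul_sub_mul_conjTranspose p n (hX.trans identity.symm)⟩
end

section
/- Under the operator-identity setup, assume additionally that A has no real eigenvalues, and let ψ be a p×p complex matrix such that i·(ψ* − ψ) is positive definite. Define A_ψ = A − Φ₂·(i·Φ₁* − ψ*·Φ₂*)·S⁻¹. Then A_ψ·S − S·A_ψ* = Φ₂·(ψ* − ψ)·Φ₂*, and A_ψ has no real eigenvalues. -/
open Matrix ComplexOrder

/-!
Write `B = A_ψ` and let `B v = c v` with `c` real and `v = S w`. The quadratic form of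
`B S - S Bᴴ = Φ₂ (ψᴴ - ψ) Φ₂ᴴ` vanishes at `w`, so the form of `ψᴴ - ψ` vanishes at `Φ₂ᴴ w`,
whence `Φ₂ᴴ w = 0`. Applying the identity to `w` itself then gives `Bᴴ w = c w`. But `Bᴴ` and `Aᴴ`
agree on the kernel of `Φ₂ᴴ`, so `c` is an eigenvalue of `Aᴴ`, and hence of `A`.
-/

section Anisotropic

variable {m n R : Type*} [Fintype m] [Fintype n]

/-- A square matrix `D` is anisotropic if its sesquilinear form `u ↦ uᴴ D u` vanishes only at
`u = 0`. Unlike definiteness, this needs no order and is insensitive to the factor `i` which makes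
`ψᴴ - ψ` Hermitian. -/
def IsAnisotropic [NonUnitalNonAssocSemiring R] [Star R] (D : Matrix m m R) : Prop :=
  ∀ u : m → R, star u ⬝ᵥ (D *ᵥ u) = 0 → u = 0

theorem IsAnisotropic.of_posDef_smul [CommRing R] [PartialOrder R] [StarRing R] {a : R}
    {D : Matrix m m R} (hD : (a • D).PosDef) : IsAnisotropic D := by
  intro u hu
  by_contra hne
  refine (hD.dotProduct_mulVec_pos hne).ne' ?_
  rw [smul_mulVec, dotProduct_smul, hu, smul_zero]

theorem IsAnisotropic.conjTranspose_mulVec_eq_zero [NonUnitalSemiring R] [StarRing R]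
    {D : Matrix m m R} (hD : IsAnisotropic D) {Φ : Matrix n m R} {w : n → R}
    (hw : star w ⬝ᵥ ((Φ * D * Φᴴ) *ᵥ w) = 0) : Φᴴ *ᵥ w = 0 := by
  refine hD _ ?_
  rwa [star_mulVec, conjTranspose_conjTranspose, ← dotProduct_mulVec, mulVec_mulVec,
    mulVec_mulVec]

end Anisotropic

section Spectrum

variable {n K : Type*} [Fintype n] [DecidableEq n] [Field K] {A : Matrix n n K} {μ : K}

theorem mem_spectrum_iff_exists_mulVec_eq_smul :
    μ ∈ spectrum K A ↔ ∃ v ≠ 0, A *ᵥ v = μ • v := by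
  rw [← spectrum_toLin', ← Module.End.hasEigenvalue_iff_mem_spectrum]
  refine ⟨fun h => ?_, fun ⟨v, hv, hAv⟩ => ?_⟩
  · obtain ⟨v, hv⟩ := h.exists_hasEigenvector
    exact ⟨v, hv.2, hv.apply_eq_smul⟩
  · exact Module.End.hasEigenvalue_of_hasEigenvector
      ⟨Module.End.mem_eigenspace_iff.2 hAv, hv⟩

theorem notMem_spectrum_iff_forall_mulVec_eq_smul :
    μ ∉ spectrum K A ↔ ∀ v, A *ᵥ v = μ • v → v = 0 := by
  simp only [mem_spectrum_iff_exists_mulVec_eq_smul, not_exists, not_and, not_imp_not, ne_eq]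

end Spectrum

section OperatorIdentity

variable {m n R : Type*} [Fintype n]

theorem star_dotProduct_sub_conjTranspose_mulVec_eq_zero [CommRing R] [StarRing R]
    {S T : Matrix n n R} (hS : S.IsHermitian) {c : R} (hc : IsSelfAdjoint c) {w : n → R}
    (hw : T *ᵥ w = c • S *ᵥ w) : star w ⬝ᵥ ((T - Tᴴ) *ᵥ w) = 0 := by
  have hadj : star w ⬝ᵥ (Tᴴ *ᵥ w) = c • (star w ⬝ᵥ (S *ᵥ w)) := by
    rw [dotProduct_mulVec, ← star_mulVec, hw, star_smul, hc.star_eq, smul_dotProduct, star_mulVec,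
      hS.eq, ← dotProduct_mulVec]
  rw [sub_mulVec, dotProduct_sub, hadj, hw, dotProduct_smul, sub_self]

variable [Fintype m] [DecidableEq n]

theorem conjTranspose_mulVec_eq_zero_and_eq_smul [CommRing R] [StarRing R]
    {B S : Matrix n n R} {Φ : Matrix n m R} {D : Matrix m m R} (hS : S.IsHermitian)
    (hSinv : IsUnit S) (hid : B * S - S * Bᴴ = Φ * D * Φᴴ) (hD : IsAnisotropic D) {c : R}
    (hc : IsSelfAdjoint c) {w : n → R} (hw : B *ᵥ (S *ᵥ w) = c • S *ᵥ w) :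
    Φᴴ *ᵥ w = 0 ∧ Bᴴ *ᵥ w = c • w := by
  have hSB : S * Bᴴ = (B * S)ᴴ := by rw [conjTranspose_mul, hS.eq]
  have hΦ : Φᴴ *ᵥ w = 0 := by
    refine hD.conjTranspose_mulVec_eq_zero ?_
    rw [← hid, hSB]
    exact star_dotProduct_sub_conjTranspose_mulVec_eq_zero hS hc (by rwa [← mulVec_mulVec])
  refine ⟨hΦ, mulVec_injective_of_isUnit hSinv ?_⟩
  calc S *ᵥ (Bᴴ *ᵥ w) = (B * S - Φ * D * Φᴴ) *ᵥ w := by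
        rw [← hid, sub_sub_cancel, mulVec_mulVec]
    _ = B *ᵥ (S *ᵥ w) - (Φ * D) *ᵥ (Φᴴ *ᵥ w) := by
        rw [sub_mulVec, mulVec_mulVec, mulVec_mulVec]
    _ = S *ᵥ (c • w) := by rw [hΦ, mulVec_zero, sub_zero, hw, mulVec_smul]

theorem mem_spectrum_of_mem_spectrum_sub_mul {K : Type*} [Field K] [StarRing K]
    {A S : Matrix n n K} {Φ : Matrix n m K} {L : Matrix m n K} {D : Matrix m m K}
    (hS : S.IsHermitian) (hSinv : IsUnit S)
    (hid : (A - Φ * L) * S - S * (A - Φ * L)ᴴ = Φ * D * Φᴴ) (hD : IsAnisotropic D) {c : K}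
    (hc : IsSelfAdjoint c) (hmem : c ∈ spectrum K (A - Φ * L)) : c ∈ spectrum K A := by
  obtain ⟨v, hv, hBv⟩ := mem_spectrum_iff_exists_mulVec_eq_smul.1 hmem
  obtain ⟨w, rfl⟩ := mulVec_surjective_iff_isUnit.2 hSinv v
  obtain ⟨hΦ, hBw⟩ := conjTranspose_mulVec_eq_zero_and_eq_smul hS hSinv hid hD hc hBv
  have hw : w ≠ 0 := by
    rintro rfl
    exact hv (mulVec_zero S)
  have hAw : Aᴴ *ᵥ w = c • w := by
    rw [← hBw, conjTranspose_sub, conjTranspose_mul, sub_mulVec, ← mulVec_mulVec, hΦ, mulVec_zero,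
      sub_zero]
  have hmem_adj : c ∈ spectrum K Aᴴ := mem_spectrum_iff_exists_mulVec_eq_smul.2 ⟨w, hw, hAw⟩
  rwa [← star_eq_conjTranspose, spectrum.map_star, Set.mem_star, hc.star_eq] at hmem_adj

/-- The matrix `A_ψ = A - Φ₂ (i Φ₁ᴴ - ψᴴ Φ₂ᴴ) S⁻¹` obtained from the data `A`, `S`, `Φ₁`, `Φ₂` of an
operator identity and a parameter matrix `ψ`. -/
noncomputable def psiPerturbation (A S : Matrix n n ℂ) (Φ₁ Φ₂ : Matrix n m ℂ)
    (ψ : Matrix m m ℂ) : Matrix n n ℂ :=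
  A - Φ₂ * (Complex.I • Φ₁ᴴ - ψᴴ * Φ₂ᴴ) * S⁻¹

variable {A S : Matrix n n ℂ} {Φ₁ Φ₂ : Matrix n m ℂ}

theorem psiPerturbation_operator_identity (hS : S.IsHermitian) (hSinv : IsUnit S)
    (hid : A * S - S * Aᴴ = Complex.I • (Φ₁ * Φ₂ᴴ + Φ₂ * Φ₁ᴴ)) (ψ : Matrix m m ℂ) :
    psiPerturbation A S Φ₁ Φ₂ ψ * S - S * (psiPerturbation A S Φ₁ Φ₂ ψ)ᴴ =
      Φ₂ * (ψᴴ - ψ) * Φ₂ᴴ := by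
  set B := psiPerturbation A S Φ₁ Φ₂ ψ with hB
  have hBS : B * S = A * S - Φ₂ * (Complex.I • Φ₁ᴴ - ψᴴ * Φ₂ᴴ) := by
    rw [hB, psiPerturbation, Matrix.sub_mul,
      nonsing_inv_mul_cancel_right _ _ ((isUnit_iff_isUnit_det S).1 hSinv)]
  have hSB : S * Bᴴ = S * Aᴴ + (Complex.I • Φ₁ + Φ₂ * ψ) * Φ₂ᴴ := by
    calc S * Bᴴ = (B * S)ᴴ := by rw [conjTranspose_mul, hS.eq]
      _ = S * Aᴴ + (Complex.I • Φ₁ + Φ₂ * ψ) * Φ₂ᴴ := by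
        rw [hBS]
        simp only [conjTranspose_sub, conjTranspose_mul, conjTranspose_smul,
          conjTranspose_conjTranspose, RCLike.star_def, Complex.conj_I, neg_smul, hS.eq,
          Matrix.sub_mul, Matrix.add_mul, Matrix.neg_mul, Matrix.smul_mul]
        abel
  calc B * S - S * Bᴴ
      = (A * S - S * Aᴴ) - Φ₂ * (Complex.I • Φ₁ᴴ - ψᴴ * Φ₂ᴴ)
          - (Complex.I • Φ₁ + Φ₂ * ψ) * Φ₂ᴴ := by rw [hBS, hSB]; abel
    _ = Φ₂ * (ψᴴ - ψ) * Φ₂ᴴ := by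
        simp only [hid, Matrix.mul_sub, Matrix.sub_mul, Matrix.add_mul, Matrix.mul_smul,
          Matrix.smul_mul, smul_add, Matrix.mul_assoc]
        abel

theorem stmt_4_general (hS : S.IsHermitian) (hSinv : IsUnit S)
    (hid : A * S - S * Aᴴ = Complex.I • (Φ₁ * Φ₂ᴴ + Φ₂ * Φ₁ᴴ)) {ψ : Matrix m m ℂ}
    (hψ : IsAnisotropic (ψᴴ - ψ)) :
    (psiPerturbation A S Φ₁ Φ₂ ψ * S - S * (psiPerturbation A S Φ₁ Φ₂ ψ)ᴴ =
      Φ₂ * (ψᴴ - ψ) * Φ₂ᴴ) ∧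
    ∀ c : ℝ, (c : ℂ) ∈ spectrum ℂ (psiPerturbation A S Φ₁ Φ₂ ψ) → (c : ℂ) ∈ spectrum ℂ A := by
  have hidψ := psiPerturbation_operator_identity hS hSinv hid ψ
  refine ⟨hidψ, fun c hc => ?_⟩
  rw [psiPerturbation, Matrix.mul_assoc] at hidψ hc
  exact mem_spectrum_of_mem_spectrum_sub_mul hS hSinv hidψ hψ (Complex.conj_ofReal c) hc

end OperatorIdentity

/-- Under the operator-identity setup, if `A` has no real eigenvalues and
`ψ` is a `p × p` matrix with `i (ψᴴ - ψ)` positive definite, then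
`A_ψ = A - Φ₂ (i Φ₁ᴴ - ψᴴ Φ₂ᴴ) S⁻¹` satisfies `A_ψ S - S A_ψᴴ = Φ₂ (ψᴴ - ψ) Φ₂ᴴ` and
`A_ψ` has no real eigenvalues. -/
theorem stmt_4 (p N : ℕ) (hp : 0 < p) (hN : 0 < N)
    (A S : Matrix (Fin N) (Fin N) ℂ) (Φ₁ Φ₂ : Matrix (Fin N) (Fin p) ℂ)
    (hS : S.IsHermitian) (hSinv : IsUnit S)
    (hid : A * S - S * Aᴴ = Complex.I • (Φ₁ * Φ₂ᴴ + Φ₂ * Φ₁ᴴ))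
    (hA : ∀ (c : ℝ) (v : Fin N → ℂ), A.mulVec v = (c : ℂ) • v → v = 0)
    (ψ : Matrix (Fin p) (Fin p) ℂ)
    (hψ : (Complex.I • (ψᴴ - ψ)).PosDef) :
    ((A - Φ₂ * (Complex.I • Φ₁ᴴ - ψᴴ * Φ₂ᴴ) * S⁻¹) * S -
        S * (A - Φ₂ * (Complex.I • Φ₁ᴴ - ψᴴ * Φ₂ᴴ) * S⁻¹)ᴴ =
      Φ₂ * (ψᴴ - ψ) * Φ₂ᴴ) ∧
    ∀ (c : ℝ) (v : Fin N → ℂ),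
      (A - Φ₂ * (Complex.I • Φ₁ᴴ - ψᴴ * Φ₂ᴴ) * S⁻¹).mulVec v = (c : ℂ) • v → v = 0 := by
  obtain ⟨hidψ, hspec⟩ := stmt_4_general hS hSinv hid (.of_posDef_smul hψ)
  exact ⟨hidψ, fun c => notMem_spectrum_iff_forall_mulVec_eq_smul.1 <|
    mt (hspec c) (notMem_spectrum_iff_forall_mulVec_eq_smul.2 (hA c))⟩
end
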